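/- Let λ ≥ 2 and 1/2 ≤ σ < 1, and let α satisfy 0 ≤ 2σ − 1 < α ≤ 1. Suppose u : [0,∞) → ℝ is continuous, ∫₀^∞ |u(y)|/(1+y)^{1+2σ} dy < ∞, u is differentiable on ℝ₊, and u′ ∈ C^α_+ (with u′ ∈ Lip_+ when α = 1). Then for every x > 0: the principal value C_σ^λ(x) := lim_{ε→0⁺} ∫_{y>0, ε≤|x−y|≤1} K_σ^λ(x,y)(x−y) dy exists, the integral ∫₀^∞ (u(x) − u(y) − u′(x)(x−y)·1_{{|x−y|≤1}}) K_σ^λ(x,y) dy converges absolutely, the integral ∫₀^∞ (W_t^λ u(x) − u(x)) t^{−1−σ} dt converges absolutely, and (1/Γ(−σ)) ∫₀^∞ (W_t^λ u(x) − u(x)) t^{−1−σ} dt = ∫₀^∞ (u(x) − u(y) − u′(x)(x−y)·1_{{|x−y|≤1}}) K_σ^λ(x,y) dy + u(x) B_σ^λ(x) + u′(x) C_σ^λ(x). -/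

import Mathlib

open Real MeasureTheory Set Filter

noncomputable section

/-- The modified Bessel function of the first kind `I_ν(z)`. -/
def besselI (ν z : ℝ) : ℝ :=
  ∑' k : ℕ, (z / 2) ^ (2 * (k : ℝ) + ν) / ((Nat.factorial k : ℝ) * Real.Gamma ((k : ℝ) + ν + 1))

/-- The Bessel heat kernel `W_t^λ(x,y)`. -/
def besselHeatKernel (lam t x y : ℝ) : ℝ :=
  Real.sqrt (x * y) / (2 * t) * besselI (lam - 1 / 2) (x * y / (2 * t)) *
    Real.exp (-(x ^ 2 + y ^ 2) / (4 * t))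

/-- The Bessel–Poisson kernel `P_t^λ(x,y)`, obtained by subordination. -/
def besselPoissonKernel (lam t x y : ℝ) : ℝ :=
  t / (2 * Real.sqrt Real.pi) *
    ∫ s in Set.Ioi (0 : ℝ),
      s ^ (-(3 : ℝ) / 2) * Real.exp (-t ^ 2 / (4 * s)) * besselHeatKernel lam s x y

/-- The Bessel heat semigroup `W_t^λ u (x)`. -/
def heatSemigroup (lam : ℝ) (u : ℝ → ℝ) (t x : ℝ) : ℝ :=
  ∫ y in Set.Ioi (0 : ℝ), besselHeatKernel lam t x y * u y

/-- The Bessel–Poisson semigroup `P_t^λ f (x)`. -/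
def poissonSemigroup (lam : ℝ) (f : ℝ → ℝ) (t x : ℝ) : ℝ :=
  ∫ y in Set.Ioi (0 : ℝ), besselPoissonKernel lam t x y * f y

/-- The set of Hölder quotients of `f` on `(0,∞)`. -/
def holderRatioSet (α : ℝ) (f : ℝ → ℝ) : Set ℝ :=
  {r | ∃ x y : ℝ, 0 < x ∧ 0 < y ∧ x ≠ y ∧ r = |f x - f y| / |x - y| ^ α}

/-- The set of growth quotients `|f x|/x^α` of `f` on `(0,∞)`. -/
def growthRatioSet (α : ℝ) (f : ℝ → ℝ) : Set ℝ :=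
  {r | ∃ x : ℝ, 0 < x ∧ r = |f x| / x ^ α}

/-- Membership in the Hölder space `C^α_+` (equal to `Lip_+` when `α = 1`). -/
def MemHolderPlus (α : ℝ) (f : ℝ → ℝ) : Prop :=
  ContinuousOn f (Set.Ioi 0) ∧ BddAbove (holderRatioSet α f) ∧ BddAbove (growthRatioSet α f)

/-- The `C^α_+` norm. -/
def holderPlusNorm (α : ℝ) (f : ℝ → ℝ) : ℝ :=
  sSup (holderRatioSet α f) + sSup (growthRatioSet α f)

/-- `Γ(-σ)`, written through the functional equation `Γ(-σ) = Γ(2-σ)/((-σ)(1-σ))`. -/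
def gammaNeg (σ : ℝ) : ℝ := Real.Gamma (2 - σ) / (-σ * (1 - σ))

/-- The kernel `K_σ^λ(x,y)`. -/
def fracKernelK (lam σ x y : ℝ) : ℝ :=
  1 / (-gammaNeg σ) * ∫ t in Set.Ioi (0 : ℝ), besselHeatKernel lam t x y * t ^ (-1 - σ)

/-- `W_t^λ 1 (x)`. -/
def heatOne (lam t x : ℝ) : ℝ := ∫ y in Set.Ioi (0 : ℝ), besselHeatKernel lam t x y

/-- The function `B_σ^λ(x)`. -/
def fracFunB (lam σ x : ℝ) : ℝ :=
  1 / gammaNeg σ * ∫ t in Set.Ioi (0 : ℝ), (heatOne lam t x - 1) * t ^ (-1 - σ)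

/-- The integer `m` with `m - 1 ≤ β < m`. -/
def fracOrder (β : ℝ) : ℕ := Nat.floor β + 1

/-- The Segovia–Wheeden fractional derivative `∂_t^β F(t)`, a complex number. -/
def fracDeriv (β : ℝ) (F : ℝ → ℝ) (t : ℝ) : ℂ :=
  Complex.exp (-(Real.pi * ((fracOrder β : ℝ) - β)) * Complex.I) /
      Complex.ofReal (Real.Gamma ((fracOrder β : ℝ) - β)) *
    Complex.ofReal
      (∫ s in Set.Ioi (0 : ℝ),
        iteratedDeriv (fracOrder β) F (t + s) * s ^ ((fracOrder β : ℝ) - β - 1))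

open scoped Topology

/-- Euler's beta integral over the reals. -/
lemma integral_rpow_mul_one_sub_rpow {a b : ℝ} (ha : 0 < a) (hb : 0 < b) :
    ∫ x in (0 : ℝ)..1, x ^ (a - 1) * (1 - x) ^ (b - 1) = Gamma a * Gamma b / Gamma (a + b) := by
  have h := Complex.betaIntegral_eq_Gamma_mul_div a b (by simpa) (by simpa)
  rw [← Complex.ofReal_add, Complex.Gamma_ofReal, Complex.Gamma_ofReal, Complex.Gamma_ofReal,
    Complex.betaIntegral] at h
  have h2 : ∫ x in (0 : ℝ)..1, (x : ℂ) ^ ((a : ℂ) - 1) * (1 - (x : ℂ)) ^ ((b : ℂ) - 1) =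
      ∫ x in (0 : ℝ)..1, ((x ^ (a - 1) * (1 - x) ^ (b - 1) : ℝ) : ℂ) := by
    refine intervalIntegral.integral_congr fun x hx => ?_
    rw [uIcc_of_le zero_le_one] at hx
    rw [Complex.ofReal_mul, Complex.ofReal_cpow hx.1, Complex.ofReal_cpow (sub_nonneg.2 hx.2)]
    push_cast
    rfl
  rw [h2, intervalIntegral.integral_ofReal] at h
  exact_mod_cast h

/-- The even moments of the Gegenbauer weight `(1 - s²)^(lam - 1)` on `[0,1]`. -/
lemma integral_even_pow_mul_one_sub_sq_rpow {lam : ℝ} (hlam : 0 < lam) (k : ℕ) :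
    ∫ s in (0 : ℝ)..1, s ^ (2 * k) * (1 - s ^ 2) ^ (lam - 1) =
      1 / 2 * (Gamma (k + 1 / 2) * Gamma lam / Gamma (k + 1 / 2 + lam)) := by
  rw [← integral_rpow_mul_one_sub_rpow (by positivity) hlam,
    intervalIntegral.integral_of_le zero_le_one, intervalIntegral.integral_of_le zero_le_one,
    integral_Ioc_eq_integral_Ioo, integral_Ioc_eq_integral_Ioo]
  have himg : (fun s : ℝ => s ^ 2) '' Ioo 0 1 = Ioo 0 1 := by
    ext w
    constructor
    · rintro ⟨s, ⟨h0, h1⟩, rfl⟩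
      exact ⟨by positivity, by nlinarith⟩
    · rintro ⟨h0, h1⟩
      exact ⟨√w, ⟨Real.sqrt_pos.2 h0, by rw [Real.sqrt_lt' one_pos]; simpa using h1⟩,
        Real.sq_sqrt h0.le⟩
  have h := integral_image_eq_integral_abs_deriv_smul (s := Ioo (0 : ℝ) 1) (f := fun s => s ^ 2)
    (f' := fun s => 2 * s) measurableSet_Ioo
    (fun s _ => by simpa using (hasDerivAt_pow 2 s).hasDerivWithinAt)
    (fun a ha b hb hab => by
      have := (sq_eq_sq₀ ha.1.le hb.1.le).1 hab
      exact this)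
    (fun w : ℝ => w ^ ((k : ℝ) + 1 / 2 - 1) * (1 - w) ^ (lam - 1))
  rw [himg] at h
  rw [h, ← integral_const_mul]
  refine setIntegral_congr_fun measurableSet_Ioo fun s hs => ?_
  have hs0 : 0 < s := hs.1
  have e : (s ^ 2) ^ ((k : ℝ) + 1 / 2 - 1) * s = s ^ (2 * k) := by
    rw [← rpow_natCast s 2, ← rpow_mul hs0.le, ← rpow_natCast s (2 * k)]
    nth_rewrite 2 [← rpow_one s]
    rw [← rpow_add hs0]
    congr 1
    push_cast
    ring
  simp only [smul_eq_mul]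
  rw [abs_of_pos (by positivity), ← e]
  ring

/-- Poisson's integral representation of the modified Bessel function. -/
lemma besselI_eq_integral_cosh {lam : ℝ} (hlam : 1 ≤ lam) {z : ℝ} (hz : 0 < z) :
    besselI (lam - 1 / 2) z = (z / 2) ^ (lam - 1 / 2) / (√π * Gamma lam) *
      (2 * ∫ s in (0 : ℝ)..1, cosh (z * s) * (1 - s ^ 2) ^ (lam - 1)) := by
  have hsum : HasSum (fun k : ℕ => ∫ s in (0 : ℝ)..1,
      (z * s) ^ (2 * k) / ((2 * k).factorial : ℝ) * (1 - s ^ 2) ^ (lam - 1))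
      (∫ s in (0 : ℝ)..1, cosh (z * s) * (1 - s ^ 2) ^ (lam - 1)) := by
    refine intervalIntegral.hasSum_integral_of_dominated_convergence
      (fun k _ => z ^ (2 * k) / ((2 * k).factorial : ℝ)) (fun k => ?_) (fun k => ?_) ?_ ?_ ?_
    · exact Measurable.aestronglyMeasurable (by fun_prop)
    · refine Eventually.of_forall fun s hs => ?_
      rw [uIoc_of_le zero_le_one] at hs
      have h1 : 0 ≤ 1 - s ^ 2 := by nlinarith [hs.1, hs.2]
      have hs0 := hs.1.le
      rw [norm_of_nonneg (by positivity)]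
      have h2 : (1 - s ^ 2) ^ (lam - 1) ≤ 1 :=
        rpow_le_one h1 (by nlinarith) (by linarith)
      calc _ ≤ (z * s) ^ (2 * k) / ((2 * k).factorial : ℝ) * 1 := by gcongr
        _ ≤ (z * 1) ^ (2 * k) / ((2 * k).factorial : ℝ) * 1 := by gcongr; exact hs.2
        _ = _ := by simp
    · exact Eventually.of_forall fun _ _ => (Real.hasSum_cosh z).summable
    · exact intervalIntegrable_const
    · exact Eventually.of_forall fun s _ => (Real.hasSum_cosh (z * s)).mul_right _
  have h2 := (hsum.mul_left 2).mul_left ((z / 2) ^ (lam - 1 / 2) / (√π * Gamma lam))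
  rw [← h2.tsum_eq, besselI]
  congr 1
  funext k
  have e1 : ∫ s in (0 : ℝ)..1, (z * s) ^ (2 * k) / ((2 * k).factorial : ℝ) *
      (1 - s ^ 2) ^ (lam - 1) = z ^ (2 * k) / ((2 * k).factorial : ℝ) *
        (1 / 2 * (Gamma (k + 1 / 2) * Gamma lam / Gamma (k + 1 / 2 + lam))) := by
    rw [← integral_even_pow_mul_one_sub_sq_rpow (by linarith), ←
      intervalIntegral.integral_const_mul]
    congr 1
    funext s
    ring
  have e2 : Gamma ((k : ℝ) + 1 / 2) * (k.factorial : ℝ) =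
      ((2 * k).factorial : ℝ) * (2 ^ (2 * k))⁻¹ * √π := by
    have h := Real.Gamma_mul_Gamma_add_half ((k : ℝ) + 1 / 2)
    rw [show (k : ℝ) + 1 / 2 + 1 / 2 = k + 1 by ring, Real.Gamma_nat_eq_factorial,
      show 2 * ((k : ℝ) + 1 / 2) = ((2 * k : ℕ) : ℝ) + 1 by push_cast; ring,
      Real.Gamma_nat_eq_factorial] at h
    rw [h, show (1 : ℝ) - (((2 * k : ℕ) : ℝ) + 1) = -((2 * k : ℕ) : ℝ) by ring,
      rpow_neg zero_le_two, rpow_natCast]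
  rw [e1, rpow_add (by positivity), show (k : ℝ) + (lam - 1 / 2) + 1 = k + 1 / 2 + lam by ring,
    show (2 * (k : ℝ)) = ((2 * k : ℕ) : ℝ) by push_cast; ring, rpow_natCast, div_pow]
  have hG1 : Gamma lam ≠ 0 := (Real.Gamma_pos_of_pos (by linarith)).ne'
  have hG2 : Gamma ((k : ℝ) + 1 / 2 + lam) ≠ 0 := (Real.Gamma_pos_of_pos (by positivity)).ne'
  have hk : (k.factorial : ℝ) ≠ 0 := by positivity
  have e3 : Gamma ((k : ℝ) + 1 / 2) = ((2 * k).factorial : ℝ) * (2 ^ (2 * k))⁻¹ * √π /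
      (k.factorial : ℝ) := by rw [← e2]; field_simp
  rw [e3]
  field_simp

/-- The ratio of the Bessel heat kernel to the Gaussian heat kernel, as a function of
`z = x * y / (2 * t)`. -/
def besselRatio (lam z : ℝ) : ℝ :=
  (Gamma lam)⁻¹ * ∫ v in Ioi (0 : ℝ),
    exp (-v) * v ^ (lam - 1) * (max (1 - v / (2 * z)) 0) ^ (lam - 1)

lemma besselI_eq_besselRatio {lam : ℝ} (hlam : 1 < lam) {z : ℝ} (hz : 0 < z) :
    besselI (lam - 1 / 2) z = exp z / √(2 * π * z) * besselRatio lam z := by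
  have hc : Continuous fun s : ℝ => (1 - s ^ 2) ^ (lam - 1) :=
    (by fun_prop : Continuous fun s : ℝ => 1 - s ^ 2).rpow_const fun _ => Or.inr (by linarith)
  have hfold : 2 * ∫ s in (0 : ℝ)..1, cosh (z * s) * (1 - s ^ 2) ^ (lam - 1) =
      ∫ s in (-1 : ℝ)..1, exp (z * s) * (1 - s ^ 2) ^ (lam - 1) := by
    have hi : ∀ a b : ℝ, IntervalIntegrable (fun s : ℝ => exp (z * s) * (1 - s ^ 2) ^ (lam - 1))
        volume a b := fun a b => (by fun_prop : Continuous _).intervalIntegrable a b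
    have hi2 : ∀ a b : ℝ, IntervalIntegrable
        (fun s : ℝ => exp (z * -s) * (1 - (-s) ^ 2) ^ (lam - 1)) volume a b := fun a b =>
      Continuous.intervalIntegrable (by simpa using (by fun_prop : Continuous fun s : ℝ =>
        exp (z * -s) * (1 - s ^ 2) ^ (lam - 1))) a b
    rw [← intervalIntegral.integral_add_adjacent_intervals (hi (-1) 0) (hi 0 1)]
    have h := intervalIntegral.integral_comp_neg (a := 0) (b := 1)
      (fun s : ℝ => exp (z * s) * (1 - s ^ 2) ^ (lam - 1))
    rw [neg_zero] at h
    rw [← h, ← intervalIntegral.integral_add (hi2 0 1) (hi 0 1),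
      ← intervalIntegral.integral_const_mul]
    refine intervalIntegral.integral_congr fun s _ => ?_
    simp only [Real.cosh_eq, even_two, Even.neg_pow, mul_neg]
    ring
  have hsub := intervalIntegral.integral_comp_sub_div (a := 0) (b := 2 * z)
    (fun s : ℝ => exp (z * s) * (1 - s ^ 2) ^ (lam - 1)) hz.ne' 1
  rw [show 1 - 2 * z / z = -1 by field_simp; norm_num, zero_div, sub_zero, smul_eq_mul] at hsub
  have hIoc : ∫ v in Ioi (0 : ℝ), exp (-v) * v ^ (lam - 1) *
      (max (1 - v / (2 * z)) 0) ^ (lam - 1) = ∫ v in (0 : ℝ)..(2 * z), exp (-v) * v ^ (lam - 1) *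
      (max (1 - v / (2 * z)) 0) ^ (lam - 1) := by
    rw [intervalIntegral.integral_of_le (by positivity)]
    refine setIntegral_eq_of_subset_of_forall_sdiff_eq_zero measurableSet_Ioi
      (fun v hv => hv.1) fun v hv => ?_
    have hv2 : 2 * z < v := by
      by_contra hcon
      exact hv.2 ⟨hv.1, not_lt.1 hcon⟩
    rw [max_eq_right, zero_rpow (by linarith), mul_zero]
    rw [sub_nonpos, one_le_div (by positivity)]
    exact hv2.le
  have hpt : ∫ v in (0 : ℝ)..(2 * z), exp (z * (1 - v / z)) * (1 - (1 - v / z) ^ 2) ^ (lam - 1) =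
      exp z * (2 / z) ^ (lam - 1) * ∫ v in Ioi (0 : ℝ), exp (-v) * v ^ (lam - 1) *
        (max (1 - v / (2 * z)) 0) ^ (lam - 1) := by
    rw [hIoc, ← intervalIntegral.integral_const_mul]
    refine intervalIntegral.integral_congr fun v hv => ?_
    rw [uIcc_of_le (by positivity)] at hv
    have hv1 : 0 ≤ 1 - v / (2 * z) := by
      rw [sub_nonneg, div_le_one (by positivity)]
      exact hv.2
    rw [max_eq_left hv1, show 1 - (1 - v / z) ^ 2 = 2 / z * v * (1 - v / (2 * z)) by
      field_simp; ring, mul_rpow (mul_nonneg (by positivity) hv.1) hv1,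
      mul_rpow (by positivity) hv.1, show z * (1 - v / z) = z + -v by field_simp; ring, exp_add]
    ring
  have hI : ∫ s in (-1 : ℝ)..1, exp (z * s) * (1 - s ^ 2) ^ (lam - 1) =
      z⁻¹ * (exp z * (2 / z) ^ (lam - 1) * (Gamma lam * besselRatio lam z)) := by
    have hG : Gamma lam ≠ 0 := (Real.Gamma_pos_of_pos (by linarith)).ne'
    rw [besselRatio, mul_inv_cancel_left₀ hG, ← hpt, hsub, inv_mul_cancel_left₀ hz.ne']
  have hpow : (z / 2) ^ (lam - 1 / 2) * (2 / z) ^ (lam - 1) = √(z / 2) := by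
    rw [show 2 / z = (z / 2)⁻¹ by rw [inv_div], inv_rpow (by positivity),
      ← rpow_neg (by positivity), ← rpow_add (by positivity), Real.sqrt_eq_rpow]
    congr 1
    ring
  have hG : Gamma lam ≠ 0 := (Real.Gamma_pos_of_pos (by linarith)).ne'
  rw [besselI_eq_integral_cosh hlam.le hz, hfold, hI]
  calc _ = ((z / 2) ^ (lam - 1 / 2) * (2 / z) ^ (lam - 1)) / (√π * z) * exp z *
        besselRatio lam z := by field_simp
    _ = _ := by
      rw [hpow]
      have e : √(z / 2) / (√π * z) = 1 / √(2 * π * z) := by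
        rw [div_eq_div_iff (by positivity) (by positivity), ← Real.sqrt_mul (by positivity),
          show z / 2 * (2 * π * z) = π * z ^ 2 by ring, Real.sqrt_mul (by positivity),
          Real.sqrt_sq hz.le]
        ring
      rw [e]
      ring

lemma integrableOn_besselRatio_integrand {lam : ℝ} (hlam : 1 ≤ lam) {z : ℝ} (hz : 0 < z) :
    IntegrableOn (fun v => exp (-v) * v ^ (lam - 1) * (max (1 - v / (2 * z)) 0) ^ (lam - 1))
      (Ioi 0) := by
  refine (Real.GammaIntegral_convergent (s := lam) (by linarith)).mono'
    (Measurable.aestronglyMeasurable (by fun_prop)) ?_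
  filter_upwards [ae_restrict_mem measurableSet_Ioi] with v hv
  have hv0 : (0 : ℝ) < v := hv
  rw [norm_of_nonneg (by positivity)]
  refine mul_le_of_le_one_right (by positivity) (rpow_le_one (by positivity) ?_ (by linarith))
  exact max_le (sub_le_self _ (by positivity)) zero_le_one

lemma besselRatio_nonneg {lam : ℝ} (hlam : 0 < lam) (z : ℝ) : 0 ≤ besselRatio lam z := by
  refine mul_nonneg (inv_nonneg.2 (Real.Gamma_pos_of_pos hlam).le)
    (setIntegral_nonneg measurableSet_Ioi fun v hv => ?_)
  have hv0 : (0 : ℝ) < v := hv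
  positivity

lemma besselRatio_le_one {lam : ℝ} (hlam : 1 ≤ lam) {z : ℝ} (hz : 0 < z) :
    besselRatio lam z ≤ 1 := by
  have hG : 0 < Gamma lam := Real.Gamma_pos_of_pos (by linarith)
  rw [besselRatio, inv_mul_le_iff₀ hG, mul_one, Real.Gamma_eq_integral (by linarith)]
  refine setIntegral_mono_on (integrableOn_besselRatio_integrand hlam hz)
    (Real.GammaIntegral_convergent (by linarith)) measurableSet_Ioi fun v hv => ?_
  have hv0 : (0 : ℝ) < v := hv
  refine mul_le_of_le_one_right (by positivity) (rpow_le_one (by positivity) ?_ (by linarith))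
  exact max_le (sub_le_self _ (by positivity)) zero_le_one

lemma one_sub_besselRatio_le {lam : ℝ} (hlam : 2 ≤ lam) {z : ℝ} (hz : 0 < z) :
    1 - besselRatio lam z ≤ lam * (lam - 1) / (2 * z) := by
  have hG : 0 < Gamma lam := Real.Gamma_pos_of_pos (by linarith)
  have hi1 : IntegrableOn (fun v => exp (-v) * v ^ (lam - 1)) (Ioi 0) :=
    Real.GammaIntegral_convergent (by linarith)
  have hi2 : IntegrableOn (fun v => exp (-v) * v ^ (lam + 1 - 1)) (Ioi 0) :=
    Real.GammaIntegral_convergent (by linarith)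
  have key : Gamma lam - (lam - 1) / (2 * z) * Gamma (lam + 1) ≤ ∫ v in Ioi (0 : ℝ),
      exp (-v) * v ^ (lam - 1) * (max (1 - v / (2 * z)) 0) ^ (lam - 1) := by
    rw [Real.Gamma_eq_integral (s := lam) (by linarith),
      Real.Gamma_eq_integral (s := lam + 1) (by linarith), ← integral_const_mul,
      ← integral_sub hi1 (hi2.const_mul _)]
    refine setIntegral_mono_on (hi1.sub (hi2.const_mul _))
      (integrableOn_besselRatio_integrand (by linarith) hz) measurableSet_Ioi fun v hv => ?_
    have hv0 : (0 : ℝ) < v := hv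
    have hb : 1 - (lam - 1) * (v / (2 * z)) ≤ (max (1 - v / (2 * z)) 0) ^ (lam - 1) := by
      rcases le_total (v / (2 * z)) 1 with h | h
      · rw [max_eq_left (by linarith)]
        have := one_add_mul_self_le_rpow_one_add (s := -(v / (2 * z))) (by linarith)
          (p := lam - 1) (by linarith)
        rw [← sub_eq_add_neg] at this
        linarith
      · have : (0 : ℝ) ≤ (max (1 - v / (2 * z)) 0) ^ (lam - 1) := by positivity
        nlinarith
    have hp : v ^ (lam + 1 - 1) = v ^ (lam - 1) * v := by
      rw [show lam + 1 - 1 = lam - 1 + 1 by ring, rpow_add_one hv0.ne']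
    rw [hp]
    calc _ = exp (-v) * v ^ (lam - 1) * (1 - (lam - 1) * (v / (2 * z))) := by ring
      _ ≤ _ := by gcongr
  rw [Real.Gamma_add_one (by linarith)] at key
  have h2 : 1 - lam * (lam - 1) / (2 * z) ≤ besselRatio lam z := by
    rw [besselRatio, inv_mul_eq_div, le_div_iff₀ hG]
    refine le_trans (le_of_eq ?_) key
    ring
  linarith

lemma measurable_besselRatio (lam : ℝ) : Measurable (besselRatio lam) := by
  have h : StronglyMeasurable (Function.uncurry fun z v : ℝ =>
      exp (-v) * v ^ (lam - 1) * (max (1 - v / (2 * z)) 0) ^ (lam - 1)) := by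
    apply Measurable.stronglyMeasurable
    unfold Function.uncurry
    fun_prop
  exact (h.integral_prod_right (ν := volume.restrict (Ioi 0))).measurable.const_mul _

/-- The Gaussian heat kernel on the line. -/
def gaussHeat (t r : ℝ) : ℝ := (√(4 * π * t))⁻¹ * exp (-r ^ 2 / (4 * t))

lemma gaussHeat_nonneg (t r : ℝ) : 0 ≤ gaussHeat t r := by
  unfold gaussHeat
  positivity

lemma gaussHeat_neg (t r : ℝ) : gaussHeat t (-r) = gaussHeat t r := by
  simp [gaussHeat]

lemma measurable_gaussHeat : Measurable fun p : ℝ × ℝ => gaussHeat p.1 p.2 := by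
  unfold gaussHeat
  fun_prop

lemma gaussHeat_sub_eq_gaussianPDFReal {t : ℝ} (ht : 0 < t) (x y : ℝ) :
    gaussHeat t (x - y) = ProbabilityTheory.gaussianPDFReal x (2 * t).toNNReal y := by
  rw [gaussHeat, ProbabilityTheory.gaussianPDFReal, Real.coe_toNNReal _ (by positivity)]
  congr 2
  · ring_nf
  · ring_nf

lemma integrable_gaussHeat_sub {t : ℝ} (ht : 0 < t) (x : ℝ) :
    Integrable fun y => gaussHeat t (x - y) := by
  simp_rw [gaussHeat_sub_eq_gaussianPDFReal ht]
  exact ProbabilityTheory.integrable_gaussianPDFReal _ _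

lemma integral_gaussHeat_sub {t : ℝ} (ht : 0 < t) (x : ℝ) :
    ∫ y, gaussHeat t (x - y) = 1 := by
  simp_rw [gaussHeat_sub_eq_gaussianPDFReal ht]
  exact ProbabilityTheory.integral_gaussianPDFReal_eq_one _ (by simpa using ht)

lemma sq_mul_gaussHeat_le {t : ℝ} (ht : 0 < t) (r : ℝ) :
    r ^ 2 * gaussHeat t r ≤ 8 * √2 * t * gaussHeat (2 * t) r := by
  have h1 : r ^ 2 / (8 * t) ≤ exp (r ^ 2 / (8 * t)) := by
    linarith [add_one_le_exp (r ^ 2 / (8 * t))]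
  have h2 : exp (-r ^ 2 / (4 * (2 * t))) = exp (r ^ 2 / (8 * t)) * exp (-r ^ 2 / (4 * t)) := by
    rw [← exp_add]
    congr 1
    field_simp
    ring
  have h3 : √(4 * π * (2 * t)) = √2 * √(4 * π * t) := by
    rw [← Real.sqrt_mul zero_le_two]
    ring_nf
  rw [gaussHeat, gaussHeat, h2, h3]
  calc r ^ 2 * ((√(4 * π * t))⁻¹ * exp (-r ^ 2 / (4 * t)))
      = 8 * t * (√(4 * π * t))⁻¹ * (r ^ 2 / (8 * t) * exp (-r ^ 2 / (4 * t))) := by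
        field_simp
    _ ≤ 8 * t * (√(4 * π * t))⁻¹ * (exp (r ^ 2 / (8 * t)) * exp (-r ^ 2 / (4 * t))) := by
        gcongr
    _ = _ := by
        have : √2 ≠ 0 := by positivity
        field_simp

/-- The Bessel heat kernel is the Gaussian heat kernel times a factor in `[0,1]`. -/
lemma besselHeatKernel_eq {lam t x y : ℝ} (hlam : 1 < lam) (ht : 0 < t) (hx : 0 < x)
    (hy : 0 < y) : besselHeatKernel lam t x y =
      gaussHeat t (x - y) * besselRatio lam (x * y / (2 * t)) := by
  have hs : √(2 * π * (x * y / (2 * t))) = √(x * y) * √(π / t) := by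
    rw [← Real.sqrt_mul (by positivity)]
    congr 1
    field_simp
  have hs2 : √(4 * π * t) = 2 * t * √(π / t) := by
    rw [show 4 * π * t = (2 * t) ^ 2 * (π / t) by field_simp; ring,
      Real.sqrt_mul (by positivity), Real.sqrt_sq (by positivity)]
  have he : exp (-(x - y) ^ 2 / (4 * t)) =
      exp (x * y / (2 * t)) * exp (-(x ^ 2 + y ^ 2) / (4 * t)) := by
    rw [← exp_add]
    congr 1
    field_simp
    ring
  rw [besselHeatKernel, besselI_eq_besselRatio hlam (by positivity), gaussHeat, hs, hs2, he]
  have h1 : √(x * y) ≠ 0 := by positivity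
  have h2 : √(π / t) ≠ 0 := by positivity
  field_simp

lemma gaussHeat_mul_rpow_eq {t : ℝ} (ht : 0 < t) (σ r : ℝ) :
    gaussHeat t r * t ^ (-1 - σ) = (√(4 * π))⁻¹ * ((|(-1 : ℝ)| * t ^ ((-1 : ℝ) - 1)) •
      ((t ^ (-1 : ℝ)) ^ (σ + 1 / 2 - 1) * exp (-(r ^ 2 / 4 * t ^ (-1 : ℝ))))) := by
  have h1 : (√(4 * π * t))⁻¹ = (√(4 * π))⁻¹ * t ^ (-(1 / 2) : ℝ) := by
    rw [Real.sqrt_mul (by positivity), mul_inv, rpow_neg ht.le, ← Real.sqrt_eq_rpow]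
  have h2 : t ^ (-(1 / 2) : ℝ) * t ^ (-1 - σ) =
      t ^ ((-1 : ℝ) - 1) * (t ^ (-1 : ℝ)) ^ (σ + 1 / 2 - 1) := by
    rw [← rpow_mul ht.le, ← rpow_add ht, ← rpow_add ht]
    congr 1
    ring
  have h3 : -r ^ 2 / (4 * t) = -(r ^ 2 / 4 * t ^ (-1 : ℝ)) := by
    rw [rpow_neg_one]
    field_simp
  rw [gaussHeat, h1, h3, abs_neg, abs_one, one_mul, smul_eq_mul]
  calc _ = (√(4 * π))⁻¹ * (t ^ (-(1 / 2) : ℝ) * t ^ (-1 - σ)) *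
        exp (-(r ^ 2 / 4 * t ^ (-1 : ℝ))) := by ring
    _ = _ := by rw [h2]; ring

lemma integrableOn_gaussHeat_mul_rpow {σ r : ℝ} (hσ : 0 < σ) (hr : r ≠ 0) :
    IntegrableOn (fun t => gaussHeat t r * t ^ (-1 - σ)) (Ioi 0) := by
  have hf : IntegrableOn (fun s : ℝ => s ^ (σ + 1 / 2 - 1) * exp (-(r ^ 2 / 4 * s))) (Ioi 0) := by
    simpa using integrableOn_rpow_mul_exp_neg_mul_rpow (p := 1) (s := σ + 1 / 2 - 1)
      (b := r ^ 2 / 4) (by linarith) one_pos (by positivity)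
  have h := ((integrableOn_Ioi_comp_rpow_iff _ (p := -1) (by norm_num)).2 hf).const_mul
    (√(4 * π))⁻¹
  exact IntegrableOn.congr_fun h (fun t ht => (gaussHeat_mul_rpow_eq ht σ r).symm)
    measurableSet_Ioi

lemma integral_gaussHeat_mul_rpow {σ r : ℝ} (hσ : 0 < σ) (hr : r ≠ 0) :
    ∫ t in Ioi (0 : ℝ), gaussHeat t r * t ^ (-1 - σ) =
      (√(4 * π))⁻¹ * 4 ^ (σ + 1 / 2) * Gamma (σ + 1 / 2) * |r| ^ (-1 - 2 * σ) := by
  rw [setIntegral_congr_fun measurableSet_Ioi fun t ht => gaussHeat_mul_rpow_eq ht σ r,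
    integral_const_mul, integral_comp_rpow_Ioi
      (fun s : ℝ => s ^ (σ + 1 / 2 - 1) * exp (-(r ^ 2 / 4 * s))) (by norm_num),
    Real.integral_rpow_mul_exp_neg_mul_Ioi (by linarith) (by positivity)]
  have hr' : 0 < |r| := abs_pos.2 hr
  have : (1 / (r ^ 2 / 4)) ^ (σ + 1 / 2) = 4 ^ (σ + 1 / 2) * |r| ^ (-1 - 2 * σ) := by
    rw [← sq_abs, one_div_div, div_rpow (by positivity) (by positivity), ← rpow_natCast |r| 2,
      ← rpow_mul hr'.le, show -1 - 2 * σ = -(((2 : ℕ) : ℝ) * (σ + 1 / 2)) by push_cast; ring,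
      rpow_neg hr'.le, div_eq_mul_inv]
  rw [this]
  ring

lemma besselHeatKernel_nonneg {lam t x y : ℝ} (hlam : 1 < lam) (ht : 0 < t) (hx : 0 < x)
    (hy : 0 < y) : 0 ≤ besselHeatKernel lam t x y := by
  rw [besselHeatKernel_eq hlam ht hx hy]
  exact mul_nonneg (gaussHeat_nonneg _ _) (besselRatio_nonneg (by linarith) _)

lemma besselHeatKernel_le_gaussHeat {lam t x y : ℝ} (hlam : 1 < lam) (ht : 0 < t) (hx : 0 < x)
    (hy : 0 < y) : besselHeatKernel lam t x y ≤ gaussHeat t (x - y) := by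
  rw [besselHeatKernel_eq hlam ht hx hy]
  exact mul_le_of_le_one_right (gaussHeat_nonneg _ _) (besselRatio_le_one hlam.le (by positivity))

lemma aestronglyMeasurable_besselHeatKernel_prod {lam x : ℝ} (hlam : 1 < lam) (hx : 0 < x) :
    AEStronglyMeasurable (fun p : ℝ × ℝ => besselHeatKernel lam p.1 x p.2)
      ((volume.restrict (Ioi 0)).prod (volume.restrict (Ioi 0))) := by
  have hm : Measurable fun p : ℝ × ℝ =>
      gaussHeat p.1 (x - p.2) * besselRatio lam (x * p.2 / (2 * p.1)) :=
    (measurable_gaussHeat.comp (measurable_fst.prodMk (measurable_snd.const_sub x))).mul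
      ((measurable_besselRatio lam).comp (by fun_prop))
  refine hm.aestronglyMeasurable.congr ?_
  rw [Measure.prod_restrict]
  filter_upwards [ae_restrict_mem (measurableSet_Ioi.prod measurableSet_Ioi)] with p hp
  exact (besselHeatKernel_eq hlam hp.1 hx hp.2).symm

lemma aestronglyMeasurable_besselHeatKernel {lam t x : ℝ} (hlam : 1 < lam) (ht : 0 < t)
    (hx : 0 < x) :
    AEStronglyMeasurable (besselHeatKernel lam t x) (volume.restrict (Ioi 0)) := by
  have hm : Measurable fun y : ℝ => gaussHeat t (x - y) * besselRatio lam (x * y / (2 * t)) :=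
    (measurable_gaussHeat.comp (measurable_const.prodMk (measurable_id.const_sub x))).mul
      ((measurable_besselRatio lam).comp (by fun_prop))
  refine hm.aestronglyMeasurable.congr ?_
  filter_upwards [ae_restrict_mem measurableSet_Ioi] with y hy
  exact (besselHeatKernel_eq hlam ht hx hy).symm

lemma integrableOn_besselHeatKernel {lam t x : ℝ} (hlam : 1 < lam) (ht : 0 < t) (hx : 0 < x) :
    IntegrableOn (besselHeatKernel lam t x) (Ioi 0) := by
  refine (integrable_gaussHeat_sub ht x).integrableOn.mono'
    (aestronglyMeasurable_besselHeatKernel hlam ht hx) ?_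
  filter_upwards [ae_restrict_mem measurableSet_Ioi] with y hy
  rw [norm_of_nonneg (besselHeatKernel_nonneg hlam ht hx hy)]
  exact besselHeatKernel_le_gaussHeat hlam ht hx hy

section Fubini

variable {lam σ x : ℝ} {D : ℝ → ℝ}

lemma integrable_prod_besselHeatKernel_mul (hlam : 1 < lam) (hσ : 0 < σ) (hx : 0 < x)
    (hDm : AEStronglyMeasurable D (volume.restrict (Ioi 0)))
    (hD : IntegrableOn (fun y => D y * |x - y| ^ (-1 - 2 * σ)) (Ioi 0)) :
    Integrable (fun p : ℝ × ℝ => besselHeatKernel lam p.1 x p.2 * D p.2 * p.1 ^ (-1 - σ))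
      ((volume.restrict (Ioi 0)).prod (volume.restrict (Ioi 0))) := by
  have hne : ∀ᵐ y ∂(volume.restrict (Ioi (0 : ℝ))), x - y ≠ 0 := by
    refine ae_restrict_of_ae ?_
    filter_upwards [compl_mem_ae_iff.2 (measure_singleton x)] with y hy h0
    exact hy (sub_eq_zero.1 h0).symm
  have hgm : AEStronglyMeasurable
      (fun p : ℝ × ℝ => gaussHeat p.1 (x - p.2) * |D p.2| * p.1 ^ (-1 - σ))
      ((volume.restrict (Ioi 0)).prod (volume.restrict (Ioi 0))) :=
    ((measurable_gaussHeat.comp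
      (measurable_fst.prodMk (measurable_snd.const_sub x))).aestronglyMeasurable.mul
        hDm.norm.comp_snd).mul (Measurable.aestronglyMeasurable (by fun_prop))
  have hg : Integrable
      (fun p : ℝ × ℝ => gaussHeat p.1 (x - p.2) * |D p.2| * p.1 ^ (-1 - σ))
      ((volume.restrict (Ioi 0)).prod (volume.restrict (Ioi 0))) := by
    rw [integrable_prod_iff' hgm]
    constructor
    · filter_upwards [hne] with y hy
      refine ((integrableOn_gaussHeat_mul_rpow hσ hy).mul_const |D y|).congr
        (Eventually.of_forall fun t => ?_)
      ring
    · refine (hD.norm.const_mul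
        ((√(4 * π))⁻¹ * 4 ^ (σ + 1 / 2) * Gamma (σ + 1 / 2))).congr ?_
      filter_upwards [hne] with y hy
      have h1 : ∫ t in Ioi (0 : ℝ), ‖gaussHeat t (x - y) * |D y| * t ^ (-1 - σ)‖ =
          ∫ t in Ioi (0 : ℝ), |D y| * (gaussHeat t (x - y) * t ^ (-1 - σ)) := by
        refine setIntegral_congr_fun measurableSet_Ioi fun t ht => ?_
        have ht0 : (0 : ℝ) < t := ht
        have := gaussHeat_nonneg t (x - y)
        rw [norm_of_nonneg (by positivity)]
        ring
      rw [h1, integral_const_mul, integral_gaussHeat_mul_rpow hσ hy, norm_mul,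
        norm_of_nonneg (by positivity : 0 ≤ |x - y| ^ (-1 - 2 * σ)), Real.norm_eq_abs]
      ring
  refine hg.mono' (((aestronglyMeasurable_besselHeatKernel_prod hlam hx).mul
    hDm.comp_snd).mul (Measurable.aestronglyMeasurable (by fun_prop))) ?_
  rw [Measure.prod_restrict]
  filter_upwards [ae_restrict_mem (measurableSet_Ioi.prod measurableSet_Ioi)] with p hp
  have ht0 : (0 : ℝ) < p.1 := hp.1
  have h1 := besselHeatKernel_nonneg hlam hp.1 hx hp.2
  have h2 := besselHeatKernel_le_gaussHeat hlam hp.1 hx hp.2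
  rw [norm_mul, norm_mul, norm_of_nonneg h1, Real.norm_eq_abs,
    norm_of_nonneg (by positivity : 0 ≤ p.1 ^ (-1 - σ))]
  gcongr

lemma integral_besselHeatKernel_mul_rpow_eq (y : ℝ) :
    ∫ t in Ioi (0 : ℝ), besselHeatKernel lam t x y * D y * t ^ (-1 - σ) =
      D y * ∫ t in Ioi (0 : ℝ), besselHeatKernel lam t x y * t ^ (-1 - σ) := by
  rw [← integral_const_mul]
  congr 1
  funext t
  ring

lemma integrableOn_mul_fracKernelK (hlam : 1 < lam) (hσ : 0 < σ) (hx : 0 < x)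
    (hDm : AEStronglyMeasurable D (volume.restrict (Ioi 0)))
    (hD : IntegrableOn (fun y => D y * |x - y| ^ (-1 - 2 * σ)) (Ioi 0)) :
    IntegrableOn (fun y => D y * fracKernelK lam σ x y) (Ioi 0) := by
  have h := (integrable_prod_besselHeatKernel_mul hlam hσ hx hDm hD).integral_prod_right
  simp only [integral_besselHeatKernel_mul_rpow_eq] at h
  refine (h.const_mul (1 / (-gammaNeg σ))).congr (Eventually.of_forall fun y => ?_)
  simp only [fracKernelK]
  ring

lemma ae_integrableOn_besselHeatKernel_mul (hlam : 1 < lam) (hσ : 0 < σ) (hx : 0 < x)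
    (hDm : AEStronglyMeasurable D (volume.restrict (Ioi 0)))
    (hD : IntegrableOn (fun y => D y * |x - y| ^ (-1 - 2 * σ)) (Ioi 0)) :
    ∀ᵐ t ∂(volume.restrict (Ioi (0 : ℝ))),
      IntegrableOn (fun y => besselHeatKernel lam t x y * D y) (Ioi 0) := by
  filter_upwards [(integrable_prod_besselHeatKernel_mul hlam hσ hx hDm hD).prod_right_ae,
    ae_restrict_mem measurableSet_Ioi] with t ht ht0
  have ht1 : t ^ (-1 - σ) ≠ 0 := (rpow_pos_of_pos ht0 _).ne'
  refine (ht.mul_const (t ^ (-1 - σ))⁻¹).congr (Eventually.of_forall fun y => ?_)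
  field_simp

lemma integrableOn_integral_besselHeatKernel_mul (hlam : 1 < lam) (hσ : 0 < σ) (hx : 0 < x)
    (hDm : AEStronglyMeasurable D (volume.restrict (Ioi 0)))
    (hD : IntegrableOn (fun y => D y * |x - y| ^ (-1 - 2 * σ)) (Ioi 0)) :
    IntegrableOn (fun t => (∫ y in Ioi (0 : ℝ), besselHeatKernel lam t x y * D y) *
      t ^ (-1 - σ)) (Ioi 0) := by
  have h := (integrable_prod_besselHeatKernel_mul hlam hσ hx hDm hD).integral_prod_left
  simpa only [IntegrableOn, integral_mul_const] using h

lemma integral_mul_fracKernelK (hlam : 1 < lam) (hσ : 0 < σ) (hx : 0 < x)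
    (hDm : AEStronglyMeasurable D (volume.restrict (Ioi 0)))
    (hD : IntegrableOn (fun y => D y * |x - y| ^ (-1 - 2 * σ)) (Ioi 0)) :
    ∫ y in Ioi (0 : ℝ), D y * fracKernelK lam σ x y = 1 / (-gammaNeg σ) *
      ∫ t in Ioi (0 : ℝ), (∫ y in Ioi (0 : ℝ), besselHeatKernel lam t x y * D y) *
        t ^ (-1 - σ) := by
  have h := integral_integral_swap (f := fun t y =>
    besselHeatKernel lam t x y * D y * t ^ (-1 - σ))
    (integrable_prod_besselHeatKernel_mul hlam hσ hx hDm hD)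
  simp only [integral_besselHeatKernel_mul_rpow_eq, integral_mul_const] at h
  rw [h, ← integral_const_mul]
  congr 1
  funext y
  simp only [fracKernelK]
  ring

end Fubini

/-- The difference between the Gaussian heat kernel and the Bessel heat kernel extended by zero. -/
def heatDefect (lam t x y : ℝ) : ℝ :=
  gaussHeat t (x - y) - (Ioi (0 : ℝ)).indicator (besselHeatKernel lam t x) y

section Defect

variable {lam t x : ℝ}

lemma heatDefect_nonneg (hlam : 1 < lam) (ht : 0 < t) (hx : 0 < x) (y : ℝ) :
    0 ≤ heatDefect lam t x y := by
  rw [heatDefect, sub_nonneg]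
  exact indicator_apply_le' (fun hy => besselHeatKernel_le_gaussHeat hlam ht hx hy)
    fun _ => gaussHeat_nonneg _ _

lemma integrable_heatDefect (hlam : 1 < lam) (ht : 0 < t) (hx : 0 < x) :
    Integrable (heatDefect lam t x) :=
  (integrable_gaussHeat_sub ht x).sub
    ((integrable_indicator_iff measurableSet_Ioi).2 (integrableOn_besselHeatKernel hlam ht hx))

lemma integral_heatDefect (hlam : 1 < lam) (ht : 0 < t) (hx : 0 < x) :
    ∫ y, heatDefect lam t x y = 1 - heatOne lam t x := by
  unfold heatDefect
  rw [integral_sub (integrable_gaussHeat_sub ht x)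
    ((integrable_indicator_iff measurableSet_Ioi).2 (integrableOn_besselHeatKernel hlam ht hx)),
    integral_gaussHeat_sub ht, integral_indicator measurableSet_Ioi, heatOne]

lemma heatDefect_le (hlam : 2 ≤ lam) (ht : 0 < t) (hx : 0 < x) (y : ℝ) :
    heatDefect lam t x y ≤ (2 * lam * (lam - 1) / x ^ 2 + 4 / x ^ 2) * t *
      (gaussHeat t (x - y) + 8 * √2 * gaussHeat (2 * t) (x - y)) := by
  have hG := gaussHeat_nonneg t (x - y)
  have hG2 := gaussHeat_nonneg (2 * t) (x - y)
  have hl : 0 ≤ lam - 1 := by linarith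
  have hl0 : 0 ≤ lam := by linarith
  rcases le_total y (x / 2) with hy | hy
  · have h1 : heatDefect lam t x y ≤ gaussHeat t (x - y) :=
      sub_le_self _ (indicator_apply_nonneg fun hy0 =>
        besselHeatKernel_nonneg (by linarith) ht hx hy0)
    have h2 : gaussHeat t (x - y) ≤ 4 / x ^ 2 * ((x - y) ^ 2 * gaussHeat t (x - y)) := by
      rw [← mul_assoc]
      refine le_mul_of_one_le_left hG ?_
      rw [div_mul_eq_mul_div, one_le_div (by positivity)]
      nlinarith
    calc heatDefect lam t x y ≤ 4 / x ^ 2 * ((x - y) ^ 2 * gaussHeat t (x - y)) := h1.trans h2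
      _ ≤ 4 / x ^ 2 * (8 * √2 * t * gaussHeat (2 * t) (x - y)) := by
        exact mul_le_mul_of_nonneg_left (sq_mul_gaussHeat_le ht _) (by positivity)
      _ = (0 + 4 / x ^ 2) * t * (0 + 8 * √2 * gaussHeat (2 * t) (x - y)) := by ring
      _ ≤ _ := by gcongr; positivity
  · have hy0 : 0 < y := by linarith
    have h1 := one_sub_besselRatio_le hlam (z := x * y / (2 * t)) (by positivity)
    have h2 : lam * (lam - 1) / (2 * (x * y / (2 * t))) ≤ 2 * lam * (lam - 1) / x ^ 2 * t := by
      rw [show 2 * (x * y / (2 * t)) = x * y / t by field_simp, div_div_eq_mul_div,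
        div_mul_eq_mul_div, div_le_div_iff₀ (by positivity) (by positivity)]
      have : x ^ 2 ≤ 2 * (x * y) := by nlinarith
      have := mul_le_mul_of_nonneg_left this (by positivity : 0 ≤ lam * (lam - 1) * t)
      linarith
    rw [heatDefect, indicator_of_mem (mem_Ioi.2 hy0),
      besselHeatKernel_eq (by linarith) ht hx hy0]
    calc _ = (1 - besselRatio lam (x * y / (2 * t))) * gaussHeat t (x - y) := by ring
      _ ≤ 2 * lam * (lam - 1) / x ^ 2 * t * gaussHeat t (x - y) := by
        gcongr
        exact h1.trans h2
      _ = (2 * lam * (lam - 1) / x ^ 2 + 0) * t * (gaussHeat t (x - y) + 0) := by ring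
      _ ≤ _ := by gcongr <;> positivity

lemma heatOne_nonneg (hlam : 1 < lam) (ht : 0 < t) (hx : 0 < x) : 0 ≤ heatOne lam t x :=
  setIntegral_nonneg measurableSet_Ioi fun _ hy => besselHeatKernel_nonneg hlam ht hx hy

lemma heatOne_le_one (hlam : 1 < lam) (ht : 0 < t) (hx : 0 < x) : heatOne lam t x ≤ 1 := by
  have := integral_heatDefect hlam ht hx
  have : 0 ≤ ∫ y, heatDefect lam t x y := integral_nonneg fun y => heatDefect_nonneg hlam ht hx y
  linarith

lemma one_sub_heatOne_le (hlam : 2 ≤ lam) (ht : 0 < t) (hx : 0 < x) :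
    1 - heatOne lam t x ≤
      (2 * lam * (lam - 1) / x ^ 2 + 4 / x ^ 2) * (1 + 8 * √2) * t := by
  have hi := integrable_gaussHeat_sub ht x
  have hi2 := (integrable_gaussHeat_sub (t := 2 * t) (by positivity) x).const_mul (8 * √2)
  rw [← integral_heatDefect (by linarith) ht hx]
  refine (integral_mono (integrable_heatDefect (by linarith) ht hx) ((hi.add hi2).const_mul _)
    (heatDefect_le hlam ht hx)).trans (le_of_eq ?_)
  simp only [Pi.add_apply]
  rw [integral_const_mul, integral_add hi hi2, integral_const_mul, integral_gaussHeat_sub ht,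
    integral_gaussHeat_sub (by positivity)]
  ring

lemma aestronglyMeasurable_heatOne (hlam : 1 < lam) (hx : 0 < x) :
    AEStronglyMeasurable (fun t => heatOne lam t x) (volume.restrict (Ioi 0)) :=
  (aestronglyMeasurable_besselHeatKernel_prod hlam hx).integral_prod_right'

lemma integrableOn_heatOne_sub_one {σ : ℝ} (hlam : 2 ≤ lam) (hσ : 0 < σ) (hσ1 : σ < 1)
    (hx : 0 < x) : IntegrableOn (fun t => (heatOne lam t x - 1) * t ^ (-1 - σ)) (Ioi 0) := by
  have hm : AEStronglyMeasurable (fun t => (heatOne lam t x - 1) * t ^ (-1 - σ))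
      (volume.restrict (Ioi 0)) :=
    ((aestronglyMeasurable_heatOne (by linarith) hx).sub aestronglyMeasurable_const).mul
      (Measurable.aestronglyMeasurable (by fun_prop))
  set C := (2 * lam * (lam - 1) / x ^ 2 + 4 / x ^ 2) * (1 + 8 * √2)
  have hn : ∀ t : ℝ, 0 < t →
      ‖(heatOne lam t x - 1) * t ^ (-1 - σ)‖ = (1 - heatOne lam t x) * t ^ (-1 - σ) := by
    intro t ht
    rw [norm_mul, norm_of_nonneg (rpow_nonneg ht.le _), Real.norm_eq_abs, abs_sub_comm,
      abs_of_nonneg (sub_nonneg.2 (heatOne_le_one (by linarith) ht hx))]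
  rw [← Ioc_union_Ioi_eq_Ioi (zero_le_one (α := ℝ))]
  refine IntegrableOn.union ?_ ?_
  · have h1 : IntegrableOn (fun t : ℝ => C * t ^ (-σ)) (Ioc 0 1) := by
      rw [← intervalIntegrable_iff_integrableOn_Ioc_of_le zero_le_one]
      exact (intervalIntegral.intervalIntegrable_rpow' (by linarith)).const_mul _
    refine h1.mono' (hm.mono_measure (Measure.restrict_mono Ioc_subset_Ioi_self le_rfl)) ?_
    filter_upwards [ae_restrict_mem measurableSet_Ioc] with t ht
    have ht0 := ht.1
    rw [hn t ht0]
    have e : t ^ (-σ) = t * t ^ (-1 - σ) := by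
      nth_rewrite 2 [← rpow_one t]
      rw [← rpow_add ht0]
      congr 1
      ring
    rw [e, ← mul_assoc]
    gcongr
    exact one_sub_heatOne_le hlam ht0 hx
  · refine (integrableOn_Ioi_rpow_of_lt (a := -1 - σ) (by linarith) one_pos).mono'
      (hm.mono_measure (Measure.restrict_mono (Ioi_subset_Ioi zero_le_one) le_rfl)) ?_
    filter_upwards [ae_restrict_mem measurableSet_Ioi] with t ht
    have ht0 : 0 < t := lt_trans one_pos ht
    rw [hn t ht0]
    refine mul_le_of_le_one_left (by positivity) ?_
    linarith [heatOne_nonneg (lam := lam) (by linarith) ht0 hx]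

end Defect

/-- The first moment of the Bessel heat kernel over `ε ≤ |x - y| ≤ 1`. -/
def truncMoment (lam x ε t : ℝ) : ℝ :=
  ∫ y in {y : ℝ | 0 < y ∧ ε ≤ |x - y| ∧ |x - y| ≤ 1}, besselHeatKernel lam t x y * (x - y)

section Moment

variable {lam x : ℝ}

lemma measurableSet_annulus (x ε : ℝ) : MeasurableSet {y : ℝ | ε ≤ |x - y| ∧ |x - y| ≤ 1} :=
  MeasurableSet.inter
    (measurableSet_le (f := fun _ => ε) (g := fun y => |x - y|) (by fun_prop) (by fun_prop))
    (measurableSet_le (f := fun y => |x - y|) (g := fun _ => (1 : ℝ)) (by fun_prop) (by fun_prop))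

lemma setIntegral_annulus_pos (x ε : ℝ) (f : ℝ → ℝ) :
    ∫ y in {y : ℝ | 0 < y ∧ ε ≤ |x - y| ∧ |x - y| ≤ 1}, f y =
      ∫ y in Ioi (0 : ℝ), {y : ℝ | ε ≤ |x - y| ∧ |x - y| ≤ 1}.indicator f y := by
  rw [setIntegral_indicator (measurableSet_annulus x ε)]
  rfl

lemma truncMoment_eq {t : ℝ} (hlam : 1 < lam) (ht : 0 < t) (hx : 0 < x) (ε : ℝ) :
    truncMoment lam x ε t =
      -∫ y, {y : ℝ | ε ≤ |x - y| ∧ |x - y| ≤ 1}.indicator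
        (fun y => heatDefect lam t x y * (x - y)) y := by
  set S := {y : ℝ | ε ≤ |x - y| ∧ |x - y| ≤ 1} with hS
  have hSm : MeasurableSet S := measurableSet_annulus x ε
  have hbd : ∀ f : ℝ → ℝ, Integrable f → Integrable (S.indicator fun y => f y * (x - y)) := by
    intro f hf
    rw [integrable_indicator_iff hSm]
    refine hf.integrableOn.norm.mono' (hf.aestronglyMeasurable.restrict.mul
      (Measurable.aestronglyMeasurable (by fun_prop))) ?_
    filter_upwards [ae_restrict_mem hSm] with y hy
    rw [norm_mul]
    exact mul_le_of_le_one_right (norm_nonneg _) hy.2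
  have hodd : ∫ y, S.indicator (fun y => gaussHeat t (x - y) * (x - y)) y = 0 := by
    have h := integral_sub_left_eq_self
      (S.indicator fun y => gaussHeat t (x - y) * (x - y)) volume (2 * x)
    have e : ∀ y, S.indicator (fun y => gaussHeat t (x - y) * (x - y)) (2 * x - y) =
        -S.indicator (fun y => gaussHeat t (x - y) * (x - y)) y := by
      intro y
      have hsub : x - (2 * x - y) = -(x - y) := by ring
      have hmem : 2 * x - y ∈ S ↔ y ∈ S := by
        simp only [hS, mem_ofPred_eq, hsub, abs_neg]
      by_cases hy : y ∈ S
      · rw [indicator_of_mem hy, indicator_of_mem (hmem.2 hy), hsub, gaussHeat_neg]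
        ring
      · rw [indicator_of_notMem hy, indicator_of_notMem (fun h => hy (hmem.1 h)), neg_zero]
    simp only [e] at h
    rw [integral_neg] at h
    linarith
  have h1 : truncMoment lam x ε t =
      ∫ y, S.indicator (fun y => gaussHeat t (x - y) * (x - y)) y -
        S.indicator (fun y => heatDefect lam t x y * (x - y)) y := by
    rw [truncMoment, setIntegral_annulus_pos, ← integral_indicator measurableSet_Ioi]
    congr 1
    funext y
    by_cases hy : y ∈ S <;> by_cases hy0 : y ∈ Ioi (0 : ℝ) <;>
      (simp [hy, hy0, heatDefect, ← hS]; try ring)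
  rw [h1, integral_sub (hbd _ (integrable_gaussHeat_sub ht x))
    (hbd _ (integrable_heatDefect hlam ht hx)), hodd, zero_sub]

lemma norm_indicator_heatDefect_mul_le {t : ℝ} (hlam : 1 < lam) (ht : 0 < t) (hx : 0 < x)
    (ε y : ℝ) : ‖{y : ℝ | ε ≤ |x - y| ∧ |x - y| ≤ 1}.indicator
      (fun y => heatDefect lam t x y * (x - y)) y‖ ≤ heatDefect lam t x y := by
  have h0 := heatDefect_nonneg hlam ht hx y
  by_cases hy : y ∈ {y : ℝ | ε ≤ |x - y| ∧ |x - y| ≤ 1}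
  · rw [indicator_of_mem hy, norm_mul, norm_of_nonneg h0]
    exact mul_le_of_le_one_right h0 hy.2
  · rw [indicator_of_notMem hy, norm_zero]
    exact h0

lemma abs_truncMoment_le {t : ℝ} (hlam : 1 < lam) (ht : 0 < t) (hx : 0 < x) (ε : ℝ) :
    |truncMoment lam x ε t| ≤ 1 - heatOne lam t x := by
  rw [truncMoment_eq hlam ht hx, abs_neg, ← integral_heatDefect hlam ht hx]
  exact norm_integral_le_of_norm_le (integrable_heatDefect hlam ht hx)
    (Eventually.of_forall (norm_indicator_heatDefect_mul_le hlam ht hx ε))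

lemma tendsto_truncMoment {t : ℝ} (hlam : 1 < lam) (ht : 0 < t) (hx : 0 < x) :
    Tendsto (fun ε => truncMoment lam x ε t) (𝓝[>] 0) (𝓝 (truncMoment lam x 0 t)) := by
  simp only [truncMoment_eq hlam ht hx]
  refine (tendsto_integral_filter_of_dominated_convergence (heatDefect lam t x)
    (Eventually.of_forall fun ε => ?_)
    (Eventually.of_forall fun ε => Eventually.of_forall
      (norm_indicator_heatDefect_mul_le hlam ht hx ε))
    (integrable_heatDefect hlam ht hx) ?_).neg
  · exact ((integrable_heatDefect hlam ht hx).aestronglyMeasurable.mul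
      (Measurable.aestronglyMeasurable (by fun_prop))).indicator (measurableSet_annulus x ε)
  · filter_upwards [compl_mem_ae_iff.2 (measure_singleton x)] with y hy
    have hpos : 0 < |x - y| := abs_pos.2 (sub_ne_zero.2 fun h => hy h.symm)
    refine tendsto_const_nhds.congr' ?_
    filter_upwards [Ioo_mem_nhdsGT hpos] with ε hε
    simp only [indicator, mem_ofPred_eq, hε.2.le, abs_nonneg, true_and]

lemma aestronglyMeasurable_truncMoment (hlam : 1 < lam) (hx : 0 < x) (ε : ℝ) :
    AEStronglyMeasurable (truncMoment lam x ε) (volume.restrict (Ioi 0)) := by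
  have hm : AEStronglyMeasurable (fun p : ℝ × ℝ => besselHeatKernel lam p.1 x p.2 *
      {y : ℝ | ε ≤ |x - y| ∧ |x - y| ≤ 1}.indicator (fun y => x - y) p.2)
      ((volume.restrict (Ioi 0)).prod (volume.restrict (Ioi 0))) :=
    (aestronglyMeasurable_besselHeatKernel_prod hlam hx).mul
      (((by fun_prop : Measurable fun y : ℝ => x - y).indicator
        (measurableSet_annulus x ε)).comp measurable_snd).aestronglyMeasurable
  refine hm.integral_prod_right'.congr (Eventually.of_forall fun t => ?_)
  simp only [truncMoment, setIntegral_annulus_pos, indicator_mul_right]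

lemma norm_truncMoment_mul_rpow_le {σ t : ℝ} (hlam : 1 < lam) (ht : 0 < t) (hx : 0 < x)
    (ε : ℝ) : ‖truncMoment lam x ε t * t ^ (-1 - σ)‖ ≤
      ‖(heatOne lam t x - 1) * t ^ (-1 - σ)‖ := by
  rw [norm_mul, norm_mul]
  gcongr
  rw [Real.norm_eq_abs, Real.norm_eq_abs, abs_sub_comm]
  exact (abs_truncMoment_le hlam ht hx ε).trans (le_abs_self _)

lemma integrableOn_truncMoment {σ : ℝ} (hlam : 2 ≤ lam) (hσ : 0 < σ) (hσ1 : σ < 1)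
    (hx : 0 < x) (ε : ℝ) :
    IntegrableOn (fun t => truncMoment lam x ε t * t ^ (-1 - σ)) (Ioi 0) := by
  have hm : AEStronglyMeasurable (fun t => truncMoment lam x ε t * t ^ (-1 - σ))
      (volume.restrict (Ioi 0)) :=
    (aestronglyMeasurable_truncMoment (by linarith) hx ε).mul
      (Measurable.aestronglyMeasurable (by fun_prop))
  refine Integrable.mono (integrableOn_heatOne_sub_one hlam hσ hσ1 hx) hm ?_
  filter_upwards [ae_restrict_mem measurableSet_Ioi] with t ht
  exact norm_truncMoment_mul_rpow_le (by linarith) ht hx ε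

lemma integral_annulus_fracKernelK {σ ε : ℝ} (hlam : 1 < lam) (hσ : 0 < σ) (hx : 0 < x)
    (hε : 0 < ε) :
    ∫ y in {y : ℝ | 0 < y ∧ ε ≤ |x - y| ∧ |x - y| ≤ 1}, fracKernelK lam σ x y * (x - y) =
      1 / (-gammaNeg σ) * ∫ t in Ioi (0 : ℝ), truncMoment lam x ε t * t ^ (-1 - σ) := by
  set S := {y : ℝ | ε ≤ |x - y| ∧ |x - y| ≤ 1} with hS
  have hSm : MeasurableSet S := measurableSet_annulus x ε
  have hDm : Measurable (S.indicator fun y => x - y) :=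
    (by fun_prop : Measurable fun y : ℝ => x - y).indicator hSm
  have hSvol : volume S ≠ ⊤ := by
    refine ((measure_mono (fun y hy => ?_)).trans_lt
      (measure_Icc_lt_top (a := x - 1) (b := x + 1))).ne
    have := abs_le.1 hy.2
    exact ⟨by linarith, by linarith⟩
  have hD : IntegrableOn (fun y => S.indicator (fun y => x - y) y * |x - y| ^ (-1 - 2 * σ))
      (Ioi 0) := by
    have hc : Integrable (S.indicator fun _ => ε ^ (-1 - 2 * σ)) :=
      (integrable_indicator_iff hSm).2 (integrableOn_const hSvol)
    refine hc.integrableOn.mono' (hDm.mul (by fun_prop)).aestronglyMeasurable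
      (Eventually.of_forall fun y => ?_)
    by_cases hy : y ∈ S
    · rw [indicator_of_mem hy, indicator_of_mem hy, norm_mul,
        norm_of_nonneg (by positivity : 0 ≤ |x - y| ^ (-1 - 2 * σ))]
      have h1 : |x - y| ^ (-1 - 2 * σ) ≤ ε ^ (-1 - 2 * σ) :=
        rpow_le_rpow_of_nonpos hε hy.1 (by linarith)
      calc _ ≤ 1 * ε ^ (-1 - 2 * σ) := by
            gcongr
            exact hy.2
        _ = _ := one_mul _
    · rw [indicator_of_notMem hy, indicator_of_notMem hy, zero_mul, norm_zero]
  have h := integral_mul_fracKernelK hlam hσ hx hDm.aestronglyMeasurable hD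
  rw [setIntegral_annulus_pos]
  convert h using 1
  · congr 1
    funext y
    rw [← hS]
    by_cases hy : y ∈ S <;> simp [hy, mul_comm]
  · simp only [truncMoment, setIntegral_annulus_pos, indicator_mul_right, ← hS]

lemma tendsto_integral_annulus_fracKernelK {σ : ℝ} (hlam : 2 ≤ lam) (hσ : 0 < σ) (hσ1 : σ < 1)
    (hx : 0 < x) :
    Tendsto (fun ε : ℝ => ∫ y in {y : ℝ | 0 < y ∧ ε ≤ |x - y| ∧ |x - y| ≤ 1},
        fracKernelK lam σ x y * (x - y)) (𝓝[>] 0)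
      (𝓝 (1 / (-gammaNeg σ) * ∫ t in Ioi (0 : ℝ), truncMoment lam x 0 t * t ^ (-1 - σ))) := by
  have hev : ∀ᶠ ε : ℝ in 𝓝[>] 0,
      1 / (-gammaNeg σ) * ∫ t in Ioi (0 : ℝ), truncMoment lam x ε t * t ^ (-1 - σ) =
        ∫ y in {y : ℝ | 0 < y ∧ ε ≤ |x - y| ∧ |x - y| ≤ 1}, fracKernelK lam σ x y * (x - y) := by
    filter_upwards [self_mem_nhdsWithin] with ε hε
    exact (integral_annulus_fracKernelK (by linarith) hσ hx hε).symm
  refine Tendsto.congr' hev (Tendsto.const_mul _ ?_)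
  refine tendsto_integral_filter_of_dominated_convergence
    (fun t => ‖(heatOne lam t x - 1) * t ^ (-1 - σ)‖)
    (Eventually.of_forall fun ε => (integrableOn_truncMoment hlam hσ hσ1 hx ε).1)
    (Eventually.of_forall fun ε => ?_) (integrableOn_heatOne_sub_one hlam hσ hσ1 hx).norm ?_
  · filter_upwards [ae_restrict_mem measurableSet_Ioi] with t ht
    exact norm_truncMoment_mul_rpow_le (by linarith) ht hx ε
  · filter_upwards [ae_restrict_mem measurableSet_Ioi] with t ht
    exact (tendsto_truncMoment (by linarith) ht hx).mul_const _

end Moment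

lemma integrableOn_abs_sub_rpow {s : ℝ} (hs : -1 < s) (x : ℝ) :
    IntegrableOn (fun y => |x - y| ^ s) {y : ℝ | |x - y| ≤ 1} := by
  have h1 : IntervalIntegrable (fun r : ℝ => |r| ^ s) volume 0 1 := by
    refine (intervalIntegral.intervalIntegrable_rpow' hs).congr fun r hr => ?_
    rw [uIoc_of_le zero_le_one] at hr
    simp only [abs_of_pos hr.1]
  have h2 : IntervalIntegrable (fun r : ℝ => |r| ^ s) volume (-1) 0 := by
    rw [IntervalIntegrable.iff_comp_neg]
    simpa using h1.symm
  have h3 := (h2.trans h1).comp_sub_left x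
  rw [sub_neg_eq_add] at h3
  have h4 := (intervalIntegrable_iff_integrableOn_Icc_of_le (by linarith)).1 h3.symm
  refine h4.mono_set fun y hy => ?_
  have := abs_le.1 (show |x - y| ≤ 1 from hy)
  exact ⟨by linarith, by linarith⟩

lemma MemHolderPlus.exists_bound {α : ℝ} (hα : 0 < α) {f : ℝ → ℝ} (hf : MemHolderPlus α f) :
    ∃ H : ℝ, 0 ≤ H ∧ ∀ a b : ℝ, 0 < a → 0 < b → |f a - f b| ≤ H * |a - b| ^ α := by
  obtain ⟨M, hM⟩ := hf.2.1
  refine ⟨max M 0, le_max_right _ _, fun a b ha hb => ?_⟩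
  rcases eq_or_ne a b with rfl | hab
  · simp [zero_rpow hα.ne']
  · have hpos : 0 < |a - b| ^ α := rpow_pos_of_pos (abs_pos.2 (sub_ne_zero.2 hab)) _
    rw [← div_le_iff₀ hpos]
    exact (hM ⟨a, b, ha, hb, hab, rfl⟩).trans (le_max_left _ _)

/-- First-order Taylor estimate for a function with Hölder continuous derivative. -/
lemma abs_taylor_le {α H : ℝ} {u : ℝ → ℝ} (hα : 0 < α) (hH : 0 ≤ H)
    (hdiff : ∀ x ∈ Ioi (0 : ℝ), DifferentiableAt ℝ u x)
    (hu' : ∀ a b : ℝ, 0 < a → 0 < b → |deriv u a - deriv u b| ≤ H * |a - b| ^ α)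
    {x y : ℝ} (hx : 0 < x) (hy : 0 < y) :
    |u x - u y - deriv u x * (x - y)| ≤ H * |x - y| ^ (1 + α) := by
  have hpos : ∀ w ∈ uIcc x y, 0 < w := fun w hw => (lt_min hx hy).trans_le hw.1
  have hd : ∀ w ∈ uIcc x y, HasDerivWithinAt (fun w => u w - deriv u x * w)
      (deriv u w - deriv u x) (uIcc x y) w := fun w hw => by
    simpa using ((hdiff w (hpos w hw)).hasDerivAt.fun_sub
      ((hasDerivAt_id w).const_mul (deriv u x))).hasDerivWithinAt
  have hb : ∀ w ∈ uIcc x y, ‖deriv u w - deriv u x‖ ≤ H * |x - y| ^ α := fun w hw => by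
    refine (hu' w x (hpos w hw) hx).trans ?_
    refine mul_le_mul_of_nonneg_left (rpow_le_rpow (abs_nonneg _) ?_ hα.le) hH
    rw [abs_sub_comm x y]
    exact abs_sub_left_of_mem_uIcc hw
  have h := (convex_uIcc x y).norm_image_sub_le_of_norm_hasDerivWithin_le hd hb
    right_mem_uIcc left_mem_uIcc
  rw [Real.norm_eq_abs, Real.norm_eq_abs] at h
  calc |u x - u y - deriv u x * (x - y)|
      = |u x - deriv u x * x - (u y - deriv u x * y)| := by congr 1; ring
    _ ≤ _ := h
    _ = _ := by rw [mul_assoc, ← rpow_add_one' (abs_nonneg _) (by linarith), add_comm α]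

section Remainder

variable {σ α x : ℝ} {u : ℝ → ℝ}

lemma aestronglyMeasurable_taylor_remainder (hcont : ContinuousOn u (Ici 0)) (c : ℝ) :
    AEStronglyMeasurable
      (fun y => u x - u y - c * (x - y) * (if |x - y| ≤ 1 then (1 : ℝ) else 0))
      (volume.restrict (Ioi 0)) := by
  have hu : AEStronglyMeasurable u (volume.restrict (Ioi 0)) :=
    (hcont.mono Ioi_subset_Ici_self).aestronglyMeasurable measurableSet_Ioi
  have hi : Measurable fun y : ℝ => c * (x - y) * (if |x - y| ≤ 1 then (1 : ℝ) else 0) :=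
    (by fun_prop : Measurable fun y : ℝ => c * (x - y)).mul
      (Measurable.ite (measurableSet_le (by fun_prop) (by fun_prop))
        measurable_const measurable_const)
  exact (aestronglyMeasurable_const.sub hu).sub hi.aestronglyMeasurable

lemma integrableOn_taylor_remainder (hσ : 0 < σ) (hα0 : 0 < α) (hα : 2 * σ - 1 < α)
    (hcont : ContinuousOn u (Ici 0))
    (huL : IntegrableOn (fun y => |u y| / (1 + y) ^ (1 + 2 * σ)) (Ioi 0))
    (hdiff : ∀ x ∈ Ioi (0 : ℝ), DifferentiableAt ℝ u x)
    (hu' : MemHolderPlus α (deriv u)) (hx : 0 < x) :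
    IntegrableOn (fun y =>
      (u x - u y - deriv u x * (x - y) * (if |x - y| ≤ 1 then (1 : ℝ) else 0)) *
        |x - y| ^ (-1 - 2 * σ)) (Ioi 0) := by
  obtain ⟨H, hH, hHol⟩ := hu'.exists_bound hα0
  have hS : MeasurableSet {y : ℝ | |x - y| ≤ 1} := measurableSet_le (by fun_prop) (by fun_prop)
  have hloc : IntegrableOn
      ({y : ℝ | |x - y| ≤ 1}.indicator fun y => H * |x - y| ^ (α - 2 * σ)) (Ioi 0) :=
    ((integrable_indicator_iff hS).2
      ((integrableOn_abs_sub_rpow (by linarith) x).const_mul H)).integrableOn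
  have hone : IntegrableOn (fun y : ℝ => (y + 1) ^ (-1 - 2 * σ)) (Ioi 0) :=
    integrableOn_add_rpow_Ioi_of_lt (by linarith) (by norm_num)
  have hglob := (huL.add (hone.const_mul |u x|)).const_mul ((2 + x) ^ (1 + 2 * σ))
  refine (hloc.add hglob).mono' ((aestronglyMeasurable_taylor_remainder hcont _).mul
    (Measurable.aestronglyMeasurable (by fun_prop))) ?_
  filter_upwards [ae_restrict_mem measurableSet_Ioi] with y hy
  have hy0 : (0 : ℝ) < y := hy
  have hnn : 0 ≤ |x - y| ^ (-1 - 2 * σ) := by positivity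
  simp only [Pi.add_apply]
  rw [norm_mul, norm_of_nonneg hnn, Real.norm_eq_abs]
  by_cases h : |x - y| ≤ 1
  · rw [if_pos h, mul_one, indicator_of_mem (show y ∈ {y : ℝ | |x - y| ≤ 1} from h)]
    refine le_add_of_le_of_nonneg ?_ (by positivity)
    rcases (abs_nonneg (x - y)).eq_or_lt with h0 | h0
    · have hxy : x = y := sub_eq_zero.1 (abs_eq_zero.1 h0.symm)
      subst hxy
      simp only [sub_self, mul_zero, abs_zero, zero_mul]
      positivity
    · calc _ ≤ H * |x - y| ^ (1 + α) * |x - y| ^ (-1 - 2 * σ) := by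
            gcongr
            exact abs_taylor_le hα0 hH hdiff hHol hx hy0
        _ = _ := by
            rw [mul_assoc, ← rpow_add h0]
            congr 2
            ring
  · rw [if_neg h, mul_zero, sub_zero,
      indicator_of_notMem (show y ∉ {y : ℝ | |x - y| ≤ 1} from h), zero_add]
    have h1 : 1 < |x - y| := not_le.1 h
    have h2 : (1 + y) / (2 + x) ≤ |x - y| := by
      rw [div_le_iff₀ (by positivity)]
      have := neg_abs_le (x - y)
      nlinarith
    have h3 : |x - y| ^ (-1 - 2 * σ) ≤ (2 + x) ^ (1 + 2 * σ) * (1 + y) ^ (-1 - 2 * σ) := by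
      refine (rpow_le_rpow_of_nonpos (by positivity) h2 (by linarith)).trans (le_of_eq ?_)
      rw [div_rpow (by positivity) (by positivity), div_eq_inv_mul, ← rpow_neg (by positivity)]
      congr 2
      ring
    calc |u x - u y| * |x - y| ^ (-1 - 2 * σ)
        ≤ (|u y| + |u x|) * ((2 + x) ^ (1 + 2 * σ) * (1 + y) ^ (-1 - 2 * σ)) := by
          gcongr
          rw [add_comm]
          exact abs_sub _ _
      _ = _ := by
          rw [add_comm y 1, div_eq_mul_inv, ← rpow_neg (by positivity),
            show -(1 + 2 * σ) = -1 - 2 * σ by ring]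
          ring

end Remainder

lemma integral_sub_sub {μ : Measure ℝ} {f g h : ℝ → ℝ} (hf : Integrable f μ)
    (hg : Integrable g μ) (hh : Integrable h μ) :
    ∫ a, (f a - g a - h a) ∂μ = ∫ a, f a ∂μ - ∫ a, g a ∂μ - ∫ a, h a ∂μ := by
  rw [integral_sub (f := fun a => f a - g a) (hf.sub hg) hh, integral_sub hf hg]

/-- Decomposition of the heat semigroup into a Taylor remainder, the mass and the first moment. -/
lemma heatSemigroup_sub_eq {lam t x : ℝ} (hlam : 1 < lam) (ht : 0 < t) (hx : 0 < x)
    (u : ℝ → ℝ) (c : ℝ)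
    (hi : IntegrableOn (fun y => besselHeatKernel lam t x y *
      (u x - u y - c * (x - y) * (if |x - y| ≤ 1 then (1 : ℝ) else 0))) (Ioi 0)) :
    heatSemigroup lam u t x - u x = u x * (heatOne lam t x - 1) -
      (∫ y in Ioi (0 : ℝ), besselHeatKernel lam t x y *
        (u x - u y - c * (x - y) * (if |x - y| ≤ 1 then (1 : ℝ) else 0))) -
      c * truncMoment lam x 0 t := by
  have hW := integrableOn_besselHeatKernel hlam ht hx
  have hind : ∀ y, {y : ℝ | 0 ≤ |x - y| ∧ |x - y| ≤ 1}.indicator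
      (fun y => besselHeatKernel lam t x y * (x - y)) y =
      besselHeatKernel lam t x y * ((x - y) * (if |x - y| ≤ 1 then (1 : ℝ) else 0)) := by
    intro y
    simp only [indicator, mem_ofPred_eq, abs_nonneg, true_and]
    split_ifs <;> simp
  have hM : IntegrableOn (fun y => besselHeatKernel lam t x y *
      ((x - y) * (if |x - y| ≤ 1 then (1 : ℝ) else 0))) (Ioi 0) := by
    have hm : Measurable fun y : ℝ => (x - y) * (if |x - y| ≤ 1 then (1 : ℝ) else 0) :=
      (by fun_prop : Measurable fun y : ℝ => x - y).mul
        (Measurable.ite (measurableSet_le (by fun_prop) (by fun_prop))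
          measurable_const measurable_const)
    refine Integrable.mono hW (hW.aestronglyMeasurable.mul hm.aestronglyMeasurable)
      (Eventually.of_forall fun y => ?_)
    rw [norm_mul]
    refine mul_le_of_le_one_right (norm_nonneg _) ?_
    split_ifs with h <;> simp [h]
  have e : heatSemigroup lam u t x = ∫ y in Ioi (0 : ℝ),
      (u x * besselHeatKernel lam t x y - besselHeatKernel lam t x y *
        (u x - u y - c * (x - y) * (if |x - y| ≤ 1 then (1 : ℝ) else 0)) -
        c * (besselHeatKernel lam t x y *
          ((x - y) * (if |x - y| ≤ 1 then (1 : ℝ) else 0)))) := by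
    rw [heatSemigroup]
    congr 1
    funext y
    ring
  rw [e, integral_sub_sub (hW.const_mul _) hi (hM.const_mul _), integral_const_mul,
    integral_const_mul, truncMoment, setIntegral_annulus_pos, heatOne]
  simp only [hind]
  ring

/-- Pointwise (principal value) formula for `Δ_λ^σ u` when `1/2 ≤ σ < 1`. -/
theorem pointwise_formula_large_sigma
    (lam σ α : ℝ) (hlam : 2 ≤ lam) (hσ0 : 1 / 2 ≤ σ) (hσ1 : σ < 1)
    (hα : 2 * σ - 1 < α) (hα1 : α ≤ 1)
    (u : ℝ → ℝ) (hcont : ContinuousOn u (Set.Ici 0))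
    (huL : IntegrableOn (fun y => |u y| / (1 + y) ^ (1 + 2 * σ)) (Set.Ioi 0))
    (hdiff : ∀ x ∈ Set.Ioi (0 : ℝ), DifferentiableAt ℝ u x)
    (hu' : MemHolderPlus α (deriv u)) :
    ∀ x : ℝ, 0 < x → ∃ Cx : ℝ,
      Tendsto (fun ε : ℝ =>
          ∫ y in {y : ℝ | 0 < y ∧ ε ≤ |x - y| ∧ |x - y| ≤ 1}, fracKernelK lam σ x y * (x - y))
        (nhdsWithin 0 (Set.Ioi 0)) (nhds Cx) ∧
      IntegrableOn (fun y =>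
          (u x - u y - deriv u x * (x - y) * (if |x - y| ≤ 1 then (1 : ℝ) else 0)) *
            fracKernelK lam σ x y) (Set.Ioi 0) ∧
      IntegrableOn (fun t => (heatSemigroup lam u t x - u x) * t ^ (-1 - σ)) (Set.Ioi 0) ∧
      1 / gammaNeg σ *
          (∫ t in Set.Ioi (0 : ℝ), (heatSemigroup lam u t x - u x) * t ^ (-1 - σ)) =
        (∫ y in Set.Ioi (0 : ℝ),
            (u x - u y - deriv u x * (x - y) * (if |x - y| ≤ 1 then (1 : ℝ) else 0)) *
              fracKernelK lam σ x y) +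
          u x * fracFunB lam σ x + deriv u x * Cx := by
  intro x hx
  have hσ : 0 < σ := by linarith
  have hlam1 : 1 < lam := by linarith
  have hDm := aestronglyMeasurable_taylor_remainder (x := x) hcont (deriv u x)
  have hD := integrableOn_taylor_remainder hσ (by linarith) hα hcont huL hdiff hu' hx
  have hdec := (ae_integrableOn_besselHeatKernel_mul hlam1 hσ hx hDm hD).and
    (ae_restrict_mem measurableSet_Ioi)
  have hiB := (integrableOn_heatOne_sub_one hlam hσ hσ1 hx).const_mul (u x)
  have hiD := integrableOn_integral_besselHeatKernel_mul hlam1 hσ hx hDm hD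
  have hiM := (integrableOn_truncMoment hlam hσ hσ1 hx 0).const_mul (deriv u x)
  have hae : (fun t => u x * ((heatOne lam t x - 1) * t ^ (-1 - σ)) -
      (∫ y in Ioi (0 : ℝ), besselHeatKernel lam t x y *
        (u x - u y - deriv u x * (x - y) * (if |x - y| ≤ 1 then (1 : ℝ) else 0))) *
          t ^ (-1 - σ) - deriv u x * (truncMoment lam x 0 t * t ^ (-1 - σ)))
      =ᵐ[volume.restrict (Ioi 0)]
      fun t => (heatSemigroup lam u t x - u x) * t ^ (-1 - σ) := by
    filter_upwards [hdec] with t ht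
    rw [heatSemigroup_sub_eq hlam1 ht.2 hx u (deriv u x) ht.1]
    ring
  refine ⟨_, tendsto_integral_annulus_fracKernelK hlam hσ hσ1 hx,
    integrableOn_mul_fracKernelK hlam1 hσ hx hDm hD, ((hiB.sub hiD).sub hiM).congr hae, ?_⟩
  rw [← integral_congr_ae hae, integral_sub_sub hiB hiD hiM,
    integral_const_mul, integral_const_mul, integral_mul_fracKernelK hlam1 hσ hx hDm hD, fracFunB]
  ring
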